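/- Let r, m, k be positive integers with k < m/2 and with r > 1 or k > 1, and let n = C(m,k)^r where C(m,k) is the binomial coefficient. Consider the wreath product W = S_m ≀ S_r. Let W act on Ω = Δ^r, where Δ is the set of k-element subsets of {1,...,m} (the i-th copy of S_m acting on the i-th coordinate through its action on k-subsets, and S_r permuting the coordinates), and let W also act imprimitively on the disjoint union of r copies of {1,...,m} (rm letters) in the natural way. Then for every non-identity element g ∈ W, writing ind(g) for the index of g acting on Ω and ind'(g) for the index of g acting on the rm letters, one has ind(g)/ind'(g) > n/(3rm). -/

import Mathlib

open scoped Classical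
open Polynomial

/-- The index `ind(g)` of a permutation `g` of a finite set `Ω`: `|Ω|` minus the number
of orbits of the cyclic group generated by `g` on `Ω`. -/
noncomputable def permIndex {Ω : Type*} [Fintype Ω] (g : Equiv.Perm Ω) : ℕ :=
  Fintype.card Ω - Nat.card (MulAction.orbitRel.Quotient (Subgroup.zpowers g) Ω)

/-- The index `ind(G)` of a permutation group `G ≤ Perm Ω`: the minimum of `ind(g)` over
non-identity `g ∈ G`. -/
noncomputable def groupIndex {Ω : Type*} [Fintype Ω] (G : Subgroup (Equiv.Perm Ω)) : ℕ :=
  sInf {k | ∃ g ∈ G, g ≠ 1 ∧ permIndex g = k}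

/-- The permutation of the `k`-element subsets of `{1,...,m}` induced by a permutation
`s` of `{1,...,m}`. -/
def subsetPerm (m k : ℕ) (s : Equiv.Perm (Fin m)) :
    Equiv.Perm {S : Finset (Fin m) // S.card = k} :=
  Equiv.Perm.subtypePerm (s.finsetCongr)
    (fun S => by simp [Equiv.finsetCongr_apply, Finset.card_map])

/-- The element of the wreath product `S_m ≀ S_r` given by `(σ_1, ..., σ_r; τ)`, acting
on `Ω = Δ^r`, where `Δ` is the set of `k`-element subsets of `{1,...,m}`: the `i`-th
copy of `S_m` acts on the `i`-th coordinate through its action on `k`-subsets, and `S_r`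
permutes the coordinates. -/
def wreathOnSets (r m k : ℕ) (σ : Fin r → Equiv.Perm (Fin m)) (τ : Equiv.Perm (Fin r)) :
    Equiv.Perm (Fin r → {S : Finset (Fin m) // S.card = k}) :=
  Equiv.piCongr τ (fun i => subsetPerm m k (σ i))

/-- The element of the wreath product `S_m ≀ S_r` given by `(σ_1, ..., σ_r; τ)`, acting
imprimitively on the disjoint union of `r` copies of `{1,...,m}` (that is, `rm`
letters) in the natural way. -/
def wreathOnLetters (r m : ℕ) (σ : Fin r → Equiv.Perm (Fin m)) (τ : Equiv.Perm (Fin r)) :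
    Equiv.Perm (Fin r × Fin m) :=
  Equiv.prodShear τ σ

/-!
A nontrivial cycle of length `ℓ` contributes `ℓ - 1` to the index, so a permutation moving `s > 0`
points has index in `[s / 2, s)`. It therefore suffices that the proportion of `Ω` moved by an
element of the wreath product is at least `2 / 3` of the proportion of the `rm` letters it moves.

* If `τ ≠ 1`, say `τ i ≠ i`, the coordinate at `τ i` of a fixed point is determined by the others,
  so the proportion of fixed points is at most `1 / C(m, k) ≤ 1 / 3`.
* If `τ = 1`, every moved coordinate moves the whole point, and one is reduced to comparing
  `s ∈ S_m` acting on letters and on `k`-subsets. If two `k`-subsets `U \ {x}` and `U \ {y}` of a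
  `(k + 1)`-set `U` are both fixed, then so are `x` and `y`. Hence, for `x ∈ U`, the `x` that are
  moved are at most `3 / 2` times as many as those for which `U \ {x}` is moved; now average
  over `U`.
-/

section Index

open Finset Equiv.Perm

variable {Ω : Type*}

lemma orbitRel_zpowers_eq_sameCycle_setoid (g : Equiv.Perm Ω) :
    MulAction.orbitRel (Subgroup.zpowers g) Ω = SameCycle.setoid g := by
  ext x y
  change x ∈ MulAction.orbit _ y ↔ g.SameCycle x y
  rw [sameCycle_comm]
  simp [MulAction.mem_orbit_iff, Subgroup.smul_def, SameCycle]

variable [Fintype Ω] [DecidableEq Ω]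

lemma card_image_sameCycle_mk_support (g : Equiv.Perm Ω) :
    #(g.support.image (Quotient.mk (SameCycle.setoid g))) = g.cycleType.card := by
  let cycle : Quotient (SameCycle.setoid g) → Equiv.Perm Ω :=
    Quotient.lift g.cycleOf fun _ _ h ↦ SameCycle.cycleOf_eq h
  have cycle_injOn : Set.InjOn cycle (g.support.image (Quotient.mk (SameCycle.setoid g))) := by
    simp only [Set.InjOn, coe_image, Set.forall_mem_image]
    exact fun x hx y hy h ↦
      Quotient.sound ((sameCycle_iff_cycleOf_eq_of_mem_support hx hy).2 h)
  have image_cycle : (g.support.image (Quotient.mk (SameCycle.setoid g))).image cycle =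
      g.cycleFactorsFinset := by
    ext c
    simp only [image_image, mem_image]
    refine ⟨?_, fun hc ↦ ?_⟩
    · rintro ⟨x, hx, rfl⟩
      exact cycleOf_mem_cycleFactorsFinset_iff.2 hx
    · obtain ⟨x, hx⟩ := (mem_cycleFactorsFinset_iff.1 hc).1.nonempty_support
      exact ⟨x, mem_cycleFactorsFinset_support_le hc hx, (cycle_is_cycleOf hx hc).symm⟩
  rw [← card_image_of_injOn cycle_injOn, image_cycle, cycleType_def, Multiset.card_map, card_val]

lemma card_quotient_sameCycle (g : Equiv.Perm Ω) :
    Nat.card (Quotient (SameCycle.setoid g)) = #g.supportᶜ + g.cycleType.card := by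
  set mk := Quotient.mk (SameCycle.setoid g)
  have eq_of_mk_eq {x y : Ω} (hx : x ∈ g.supportᶜ) (h : mk x = mk y) : x = y :=
    SameCycle.eq_of_left (Quotient.exact h) (notMem_support.1 (mem_compl.1 hx))
  have card_fixed : #(g.supportᶜ.image mk) = #g.supportᶜ :=
    card_image_of_injOn fun x hx y _ h ↦ eq_of_mk_eq hx h
  have fixed_disjoint_moved : _root_.Disjoint (g.supportᶜ.image mk) (g.support.image mk) := by
    simp only [disjoint_left, mem_image, not_exists, not_and, forall_exists_index, and_imp]
    rintro _ x hx rfl y hy hyx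
    exact mem_compl.1 hx (eq_of_mk_eq hx hyx.symm ▸ hy)
  rw [← card_fixed, ← card_image_sameCycle_mk_support,
    ← card_union_of_disjoint fixed_disjoint_moved, ← image_union, union_comm, union_compl,
    image_univ_of_surjective Quotient.mk_surjective, card_univ, Nat.card_eq_fintype_card]

lemma card_orbits_zpowers (g : Equiv.Perm Ω) :
    Nat.card (MulAction.orbitRel.Quotient (Subgroup.zpowers g) Ω) =
      #g.supportᶜ + g.cycleType.card := by
  rw [MulAction.orbitRel.Quotient, orbitRel_zpowers_eq_sameCycle_setoid, card_quotient_sameCycle]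

lemma permIndex_add_card_cycleType (g : Equiv.Perm Ω) :
    permIndex g + g.cycleType.card = #g.support := by
  have card_orbits_le : Nat.card (MulAction.orbitRel.Quotient (Subgroup.zpowers g) Ω) ≤
      Fintype.card Ω := by
    rw [← Nat.card_eq_fintype_card]
    exact Nat.card_le_card_of_surjective _ Quotient.mk_surjective
  have := card_add_card_compl g.support
  rw [card_orbits_zpowers] at card_orbits_le
  rw [permIndex, card_orbits_zpowers]
  omega

lemma permIndex_lt_card_support {g : Equiv.Perm Ω} (hg : g ≠ 1) : permIndex g < #g.support := by
  have := card_cycleType_pos.2 hg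
  have := permIndex_add_card_cycleType g
  omega

lemma card_support_le_two_mul_permIndex (g : Equiv.Perm Ω) : #g.support ≤ 2 * permIndex g := by
  have : g.cycleType.card * 2 ≤ #g.support := by
    rw [← sum_cycleType]
    exact Multiset.card_nsmul_le_sum fun _ ↦ two_le_of_mem_cycleType
  have := permIndex_add_card_cycleType g
  omega

omit [DecidableEq Ω] in
lemma permIndex_pos {g : Equiv.Perm Ω} (hg : g ≠ 1) : 0 < permIndex g := by
  classical
  have := two_le_card_support_of_ne_one hg
  have := card_support_le_two_mul_permIndex g
  omega

lemma div_two_mul_lt_permIndex_div_permIndex {Λ : Type*} [Fintype Λ] [DecidableEq Λ]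
    {g : Equiv.Perm Ω} {h : Equiv.Perm Λ} (hh : h ≠ 1) {a b : ℝ} (ha : 0 < a) (hb : 0 < b)
    (hsupp : a * #h.support ≤ b * #g.support) :
    a / (2 * b) < permIndex g / permIndex h := by
  have index_pos : (0 : ℝ) < permIndex h := by exact_mod_cast permIndex_pos hh
  have index_lt : (permIndex h : ℝ) < #h.support := by exact_mod_cast permIndex_lt_card_support hh
  have support_le : (#g.support : ℝ) ≤ 2 * permIndex g := by
    exact_mod_cast card_support_le_two_mul_permIndex g
  rw [div_lt_div_iff₀ (by positivity) index_pos]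
  calc a * permIndex h < a * #h.support := by gcongr
    _ ≤ b * #g.support := hsupp
    _ ≤ b * (2 * permIndex g) := by gcongr
    _ = permIndex g * (2 * b) := by ring

end Index

section WreathActions

open Finset Equiv.Perm

variable {ι Δ α : Type*}

/-- The element `(s; τ)` of the wreath product `Perm Δ ≀ Perm ι` in its product action on `ι → Δ`:
the value at `i` is moved by `s i` and then becomes the value at `τ i`. -/
def wreathProductAction (s : ι → Equiv.Perm Δ) (τ : Equiv.Perm ι) : Equiv.Perm (ι → Δ) :=
  Equiv.piCongr τ s

/-- The element `(σ; τ)` of the wreath product `Perm α ≀ Perm ι` in its imprimitive action on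
`ι × α`, the disjoint union of the copies `{i} × α`. -/
def wreathImprimitiveAction (σ : ι → Equiv.Perm α) (τ : Equiv.Perm ι) : Equiv.Perm (ι × α) :=
  Equiv.prodShear τ σ

lemma wreathProductAction_apply (s : ι → Equiv.Perm Δ) (τ : Equiv.Perm ι) (ω : ι → Δ) (i : ι) :
    wreathProductAction s τ ω (τ i) = s i (ω i) :=
  Equiv.piCongr_apply_apply (Z := fun _ ↦ Δ) τ s ω i

lemma wreathImprimitiveAction_apply (σ : ι → Equiv.Perm α) (τ : Equiv.Perm ι) (p : ι × α) :
    wreathImprimitiveAction σ τ p = (τ p.1, σ p.1 p.2) :=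
  rfl

lemma wreathImprimitiveAction_eq_one_iff [Nonempty α] {σ : ι → Equiv.Perm α} {τ : Equiv.Perm ι} :
    wreathImprimitiveAction σ τ = 1 ↔ τ = 1 ∧ ∀ i, σ i = 1 := by
  simp only [Equiv.ext_iff, Prod.forall, wreathImprimitiveAction_apply, one_apply, Prod.mk.injEq,
    forall_and, forall_const]

variable [Fintype ι] [DecidableEq ι] [Fintype Δ] [DecidableEq Δ] [Fintype α] [DecidableEq α]

lemma card_support_mul_card_pi_le (s : ι → Equiv.Perm Δ) (i : ι) :
    #(s i).support * Fintype.card (ι → Δ) ≤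
      Fintype.card Δ * #(wreathProductAction s 1).support := by
  simp only [← card_univ, ← card_product]
  refine card_le_card_of_injOn
    (fun p : Δ × (ι → Δ) ↦ (p.2 i, Function.update p.2 i p.1)) ?_ ?_
  · rintro ⟨d, ω⟩ hd
    simp only [coe_product, Set.mem_prod, mem_coe, mem_support, mem_univ, true_and] at hd ⊢
    refine fun h ↦ hd.1 ?_
    simpa [h] using (wreathProductAction_apply s 1 (Function.update ω i d) i).symm
  · rintro ⟨d, ω⟩ - ⟨d', ω'⟩ - h
    simp only [Prod.mk.injEq] at h ⊢
    obtain ⟨hi, hupdate⟩ := h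
    refine ⟨by simpa using congrFun hupdate i, funext fun j ↦ ?_⟩
    obtain rfl | hj := eq_or_ne j i
    · exact hi
    · simpa [hj] using congrFun hupdate j

lemma card_mul_card_compl_support_wreathProductAction_le (s : ι → Equiv.Perm Δ)
    {τ : Equiv.Perm ι} (hτ : τ ≠ 1) :
    Fintype.card Δ * #(wreathProductAction s τ).supportᶜ ≤ Fintype.card (ι → Δ) := by
  obtain ⟨i, hi⟩ : ∃ i, τ i ≠ i := not_forall.1 fun h ↦ hτ (Equiv.ext h)
  have apply_eq {ω : ι → Δ} (hω : ω ∈ (wreathProductAction s τ).supportᶜ) :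
      ω (τ i) = s i (ω i) := by
    rw [← wreathProductAction_apply, notMem_support.1 (mem_compl.1 hω)]
  simp only [← card_univ, ← card_product]
  refine card_le_card_of_injOn
    (fun p : Δ × (ι → Δ) ↦ Function.update p.2 (τ i) p.1) (by simp) ?_
  rintro ⟨d, ω⟩ hω ⟨d', ω'⟩ hω' h
  have eq_of_ne {j : ι} (hj : j ≠ τ i) : ω j = ω' j := by simpa [hj] using congrFun h j
  refine Prod.ext (by simpa using congrFun h (τ i)) (funext fun j ↦ ?_)
  obtain rfl | hj := eq_or_ne j (τ i)
  · calc ω (τ i) = s i (ω i) := apply_eq (mem_product.1 hω).2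
      _ = s i (ω' i) := by rw [eq_of_ne hi.symm]
      _ = ω' (τ i) := (apply_eq (mem_product.1 hω').2).symm
  · exact eq_of_ne hj

lemma card_support_wreathImprimitiveAction_one (σ : ι → Equiv.Perm α) :
    #(wreathImprimitiveAction σ 1).support = ∑ i, #(σ i).support := by
  rw [Equiv.Perm.support, card_filter, Fintype.sum_prod_type]
  simp [Equiv.Perm.support, card_filter, wreathImprimitiveAction_apply]

lemma card_support_wreathActions_one_le [Nonempty Δ] {σ : ι → Equiv.Perm α}
    {s : ι → Equiv.Perm Δ} {a b : ℕ}
    (hsupp : ∀ i, a * Fintype.card Δ * #(σ i).support ≤ b * Fintype.card α * #(s i).support) :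
    a * Fintype.card (ι → Δ) * #(wreathImprimitiveAction σ 1).support ≤
      b * Fintype.card (ι × α) * #(wreathProductAction s 1).support := by
  have support_le (i : ι) : a * Fintype.card (ι → Δ) * #(σ i).support ≤
      b * Fintype.card α * #(wreathProductAction s 1).support := by
    refine Nat.le_of_mul_le_mul_left ?_ (Fintype.card_pos (α := Δ))
    calc Fintype.card Δ * (a * Fintype.card (ι → Δ) * #(σ i).support)
        = a * Fintype.card Δ * #(σ i).support * Fintype.card (ι → Δ) := by ring
      _ ≤ b * Fintype.card α * #(s i).support * Fintype.card (ι → Δ) :=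
        Nat.mul_le_mul_right _ (hsupp i)
      _ = b * Fintype.card α * (#(s i).support * Fintype.card (ι → Δ)) := by ring
      _ ≤ b * Fintype.card α * (Fintype.card Δ * #(wreathProductAction s 1).support) :=
        Nat.mul_le_mul_left _ (card_support_mul_card_pi_le s i)
      _ = Fintype.card Δ * (b * Fintype.card α * #(wreathProductAction s 1).support) := by ring
  calc a * Fintype.card (ι → Δ) * #(wreathImprimitiveAction σ 1).support
      = ∑ i, a * Fintype.card (ι → Δ) * #(σ i).support := by
        rw [card_support_wreathImprimitiveAction_one, mul_sum]
    _ ≤ ∑ _ : ι, b * Fintype.card α * #(wreathProductAction s 1).support :=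
      sum_le_sum fun i _ ↦ support_le i
    _ = b * Fintype.card (ι × α) * #(wreathProductAction s 1).support := by
      rw [sum_const, card_univ, smul_eq_mul, Fintype.card_prod]
      ring

lemma card_support_wreathActions_le_of_ne_one [Nonempty Δ] (σ : ι → Equiv.Perm α)
    (s : ι → Equiv.Perm Δ) {τ : Equiv.Perm ι} (hτ : τ ≠ 1) {a b : ℕ}
    (hab : a * Fintype.card Δ + b ≤ b * Fintype.card Δ) :
    a * Fintype.card (ι → Δ) * #(wreathImprimitiveAction σ τ).support ≤
      b * Fintype.card (ι × α) * #(wreathProductAction s τ).support := by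
  have card_le : a * Fintype.card (ι → Δ) ≤ b * #(wreathProductAction s τ).support := by
    have fixed_le := card_mul_card_compl_support_wreathProductAction_le s hτ
    have card_add := card_add_card_compl (wreathProductAction s τ).support
    refine Nat.le_of_mul_le_mul_left ?_ (Fintype.card_pos (α := Δ))
    refine Nat.le_of_add_le_add_right (b := b * Fintype.card (ι → Δ)) ?_
    calc Fintype.card Δ * (a * Fintype.card (ι → Δ)) + b * Fintype.card (ι → Δ)
        = (a * Fintype.card Δ + b) * Fintype.card (ι → Δ) := by ring
      _ ≤ b * Fintype.card Δ * Fintype.card (ι → Δ) := Nat.mul_le_mul_right _ hab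
      _ = Fintype.card Δ * (b * #(wreathProductAction s τ).support) +
          b * (Fintype.card Δ * #(wreathProductAction s τ).supportᶜ) := by rw [← card_add]; ring
      _ ≤ _ := Nat.add_le_add_left (Nat.mul_le_mul_left b fixed_le) _
  calc a * Fintype.card (ι → Δ) * #(wreathImprimitiveAction σ τ).support
      ≤ b * #(wreathProductAction s τ).support * Fintype.card (ι × α) :=
        Nat.mul_le_mul card_le (card_le_univ _)
    _ = b * Fintype.card (ι × α) * #(wreathProductAction s τ).support := by ring

lemma card_support_wreathActions_le [Nonempty Δ] {σ : ι → Equiv.Perm α} {s : ι → Equiv.Perm Δ}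
    (τ : Equiv.Perm ι) {a b : ℕ} (hab : a * Fintype.card Δ + b ≤ b * Fintype.card Δ)
    (hsupp : ∀ i, a * Fintype.card Δ * #(σ i).support ≤ b * Fintype.card α * #(s i).support) :
    a * Fintype.card (ι → Δ) * #(wreathImprimitiveAction σ τ).support ≤
      b * Fintype.card (ι × α) * #(wreathProductAction s τ).support := by
  obtain rfl | hτ := eq_or_ne τ 1
  · exact card_support_wreathActions_one_le hsupp
  · exact card_support_wreathActions_le_of_ne_one σ s hτ hab

end WreathActions

lemma le_choose_of_pos_of_lt {m k : ℕ} (hk : 0 < k) (hkm : k < m) : m ≤ m.choose k := by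
  induction m with
  | zero => omega
  | succ m ih =>
    obtain ⟨l, rfl⟩ : ∃ l, k = l + 1 := ⟨k - 1, by omega⟩
    rw [Nat.choose_succ_succ']
    have := Nat.choose_pos (show l ≤ m by omega)
    obtain h | h := (Nat.lt_succ_iff.1 hkm).lt_or_eq
    · have := ih h
      omega
    · subst h
      simp

section Subsets

open Finset Equiv.Perm

variable {α : Type*} [DecidableEq α]

lemma sum_card_filter_erase_powersetCard_succ (t : Finset α) (k : ℕ) (p : Finset α → Prop)
    [DecidablePred p] :
    ∑ U ∈ t.powersetCard (k + 1), #{x ∈ U | p (U.erase x)} =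
      #{S ∈ t.powersetCard k | p S} * (#t - k) := by
  have card_sdiff_eq : ∀ S ∈ {S ∈ t.powersetCard k | p S}, #(t \ S) = #t - k := by
    intro S hS
    obtain ⟨hSt, hSk⟩ := mem_powersetCard.1 (mem_filter.1 hS).1
    rw [card_sdiff_of_subset hSt, hSk]
  rw [← sum_const_nat card_sdiff_eq, ← card_sigma, ← card_sigma]
  refine card_bij' (fun q _ ↦ ⟨q.1.erase q.2, q.2⟩) (fun q _ ↦ ⟨insert q.2 q.1, q.2⟩) ?_ ?_ ?_ ?_
  · rintro ⟨U, x⟩ h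
    simp only [mem_sigma, mem_powersetCard, mem_filter, mem_sdiff] at h ⊢
    obtain ⟨⟨hUt, hUk⟩, hxU, hp⟩ := h
    exact ⟨⟨⟨(erase_subset x U).trans hUt, by rw [card_erase_of_mem hxU, hUk, Nat.add_sub_cancel]⟩,
      hp⟩, hUt hxU, notMem_erase x U⟩
  · rintro ⟨S, x⟩ h
    simp only [mem_sigma, mem_powersetCard, mem_filter, mem_sdiff] at h ⊢
    obtain ⟨⟨⟨hSt, hSk⟩, hp⟩, hxt, hxS⟩ := h
    exact ⟨⟨insert_subset hxt hSt, by rw [card_insert_of_notMem hxS, hSk]⟩,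
      mem_insert_self x S, by rwa [erase_insert hxS]⟩
  · rintro ⟨U, x⟩ h
    simp only [mem_sigma, mem_filter] at h
    simp [insert_erase h.2.1]
  · rintro ⟨S, x⟩ h
    simp only [mem_sigma, mem_sdiff] at h
    simp [erase_insert h.2.2]

lemma apply_eq_of_map_erase_eq {s : Equiv.Perm α} {U : Finset α} {x y : α} (hx : x ∈ U)
    (hxy : x ≠ y) (hUx : (U.erase x).map s.toEmbedding = U.erase x)
    (hUy : (U.erase y).map s.toEmbedding = U.erase y) : s x = x := by
  have mem_erase_y : s x ∈ U.erase y := by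
    rw [← hUy]
    exact mem_map_of_mem _ (mem_erase.2 ⟨hxy, hx⟩)
  have notMem_erase_x : s x ∉ U.erase x := by
    rw [← hUx]
    simp
  by_contra hsx
  exact notMem_erase_x (mem_erase.2 ⟨hsx, mem_of_mem_erase mem_erase_y⟩)

variable [Fintype α]

lemma two_mul_card_support_inter_le (s : Equiv.Perm α) {U : Finset α} (hU : 2 ≤ #U) :
    2 * #(s.support ∩ U) ≤ 3 * #{x ∈ U | (U.erase x).map s.toEmbedding ≠ U.erase x} := by
  by_cases hfixed : ∀ x ∈ U, (U.erase x).map s.toEmbedding = U.erase x → s x = x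
  · have : s.support ∩ U ⊆ {x ∈ U | (U.erase x).map s.toEmbedding ≠ U.erase x} := by
      intro x hx
      obtain ⟨hsx, hxU⟩ := mem_inter.1 hx
      exact mem_filter.2 ⟨hxU, fun h ↦ mem_support.1 hsx (hfixed x hxU h)⟩
    have := card_le_card this
    omega
  push Not at hfixed
  obtain ⟨x, hxU, hUx, hsx⟩ := hfixed
  have erase_subset_moved :
      U.erase x ⊆ {y ∈ U | (U.erase y).map s.toEmbedding ≠ U.erase y} := by
    intro y hy
    obtain ⟨hyx, hyU⟩ := mem_erase.1 hy
    exact mem_filter.2 ⟨hyU, fun hUy ↦ hsx (apply_eq_of_map_erase_eq hxU hyx.symm hUx hUy)⟩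
  have card_le := card_le_card erase_subset_moved
  rw [card_erase_of_mem hxU] at card_le
  have inter_le : #(s.support ∩ U) ≤ #U := card_le_card inter_subset_right
  obtain hU' | hU' := hU.lt_or_eq
  · omega
  obtain ⟨y, hy⟩ : ∃ y, U.erase x = {y} := card_eq_one.1 (by rw [card_erase_of_mem hxU, ← hU'])
  have inter_subset : s.support ∩ U ⊆ {x} := by
    intro z hz
    obtain ⟨hsz, hzU⟩ := mem_inter.1 hz
    by_contra hzx
    have hzy : z ∈ U.erase x := mem_erase.2 ⟨by simpa using hzx, hzU⟩
    simp only [hy, map_singleton, Equiv.coe_toEmbedding, singleton_inj, mem_singleton] at hUx hzy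
    exact mem_support.1 hsz (hzy ▸ hUx)
  have inter_le_one : #(s.support ∩ U) ≤ 1 := by simpa using card_le_card inter_subset
  omega

lemma card_filter_mem_powersetCard_succ (x : α) (k : ℕ) :
    #{U ∈ (univ : Finset α).powersetCard (k + 1) | x ∈ U} = (Fintype.card α - 1).choose k := by
  simpa using card_filter_powersetCard_subset {x} univ (k + 1) (subset_univ _) (by simp)

lemma two_mul_choose_mul_card_support_le (s : Equiv.Perm α) {k : ℕ} (hk : 1 ≤ k)
    (hkα : k < Fintype.card α) :
    2 * (Fintype.card α).choose k * #s.support ≤ 3 * Fintype.card α *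
      #{S ∈ (univ : Finset α).powersetCard k | S.map s.toEmbedding ≠ S} := by
  set n := Fintype.card α
  set moved := {S ∈ (univ : Finset α).powersetCard k | S.map s.toEmbedding ≠ S}
  have double_count : 2 * (#s.support * (n - 1).choose k) ≤ 3 * (#moved * (n - k)) := by
    calc 2 * (#s.support * (n - 1).choose k)
        = ∑ U ∈ univ.powersetCard (k + 1), 2 * #(s.support ∩ U) := by
          rw [← mul_sum, sum_card_inter fun x _ ↦ card_filter_mem_powersetCard_succ x k]
      _ ≤ ∑ U ∈ univ.powersetCard (k + 1),
            3 * #{x ∈ U | (U.erase x).map s.toEmbedding ≠ U.erase x} :=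
          sum_le_sum fun U hU ↦
            two_mul_card_support_inter_le s (by rw [(mem_powersetCard.1 hU).2]; omega)
      _ = 3 * (#moved * (n - k)) := by
          rw [← mul_sum, sum_card_filter_erase_powersetCard_succ univ k
            fun S ↦ S.map s.toEmbedding ≠ S, card_univ]
  have absorb : n.choose k * (n - k) = n * (n - 1).choose k := by
    obtain ⟨l, hl⟩ : ∃ l, n = l + 1 := ⟨n - 1, by omega⟩
    rw [hl, ← Nat.choose_succ_right_eq, ← Nat.add_one_mul_choose_eq, Nat.add_sub_cancel]
  refine Nat.le_of_mul_le_mul_right ?_ (Nat.sub_pos_of_lt hkα)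
  calc 2 * n.choose k * #s.support * (n - k)
      = n * (2 * (#s.support * (n - 1).choose k)) := by
        rw [show 2 * n.choose k * #s.support * (n - k) =
          2 * #s.support * (n.choose k * (n - k)) by ring, absorb]
        ring
    _ ≤ n * (3 * (#moved * (n - k))) := Nat.mul_le_mul_left n double_count
    _ = 3 * n * #moved * (n - k) := by ring

end Subsets

section WreathOnSets

open Finset Equiv.Perm

variable {r m k : ℕ}

lemma card_support_subsetPerm (s : Equiv.Perm (Fin m)) :
    #(subsetPerm m k s).support =
      #{S ∈ (univ : Finset (Fin m)).powersetCard k | S.map s.toEmbedding ≠ S} := by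
  rw [← card_map (Function.Embedding.subtype _)]
  congr 1
  ext S
  simp [subsetPerm, Subtype.ext_iff, and_comm]

lemma card_support_wreathOnLetters_le (hk : 1 ≤ k) (hkm : k < m) (hm : 2 < m)
    (σ : Fin r → Equiv.Perm (Fin m)) (τ : Equiv.Perm (Fin r)) :
    2 * m.choose k ^ r * #(wreathOnLetters r m σ τ).support ≤
      3 * (r * m) * #(wreathOnSets r m k σ τ).support := by
  have card_Δ : Fintype.card {S : Finset (Fin m) // #S = k} = m.choose k := by simp
  have three_le_choose : 3 ≤ m.choose k := hm.trans_le (le_choose_of_pos_of_lt hk hkm)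
  have : Nonempty {S : Finset (Fin m) // #S = k} := Fintype.card_pos_iff.1 (by omega)
  have subsets_le (i : Fin r) : 2 * Fintype.card {S : Finset (Fin m) // #S = k} *
      #(σ i).support ≤ 3 * Fintype.card (Fin m) * #(subsetPerm m k (σ i)).support := by
    simpa [card_support_subsetPerm] using
      two_mul_choose_mul_card_support_le (σ i) hk (by simpa using hkm)
  have wreath_le := card_support_wreathActions_le τ (by omega) subsets_le
  rwa [Fintype.card_prod, Fintype.card_pi_const, card_Δ, Fintype.card_fin, Fintype.card_fin]
    at wreath_le

lemma wreathOnLetters_ne_one [NeZero m] {σ : Fin r → Equiv.Perm (Fin m)} {τ : Equiv.Perm (Fin r)}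
    (hg : ¬(τ = 1 ∧ ∀ i, σ i = 1)) : wreathOnLetters r m σ τ ≠ 1 :=
  mt wreathImprimitiveAction_eq_one_iff.1 hg

end WreathOnSets

theorem wreath_index_ratio_general (r m k : ℕ) (hk : 1 ≤ k) (hkm : k < m) (hm : 2 < m)
    (σ : Fin r → Equiv.Perm (Fin m)) (τ : Equiv.Perm (Fin r))
    (hg : ¬(τ = 1 ∧ ∀ i, σ i = 1)) :
    ((Nat.choose m k : ℝ) ^ r) / (3 * (r : ℝ) * (m : ℝ)) <
      (permIndex (wreathOnSets r m k σ τ) : ℝ) /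
        (permIndex (wreathOnLetters r m σ τ) : ℝ) := by
  have : NeZero m := ⟨by omega⟩
  have choose_pos : 0 < m.choose k := Nat.choose_pos hkm.le
  have r_pos : 0 < r := by
    rw [Nat.pos_iff_ne_zero]
    rintro rfl
    exact hg ⟨Subsingleton.elim _ _, fun i ↦ i.elim0⟩
  have support_le : 2 * (m.choose k : ℝ) ^ r * (wreathOnLetters r m σ τ).support.card ≤
      3 * (r * m) * (wreathOnSets r m k σ τ).support.card := by
    exact_mod_cast card_support_wreathOnLetters_le hk hkm hm σ τ
  calc (m.choose k : ℝ) ^ r / (3 * r * m)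
      = 2 * (m.choose k : ℝ) ^ r / (2 * (3 * (r * m))) := by field_simp
    _ < _ := div_two_mul_lt_permIndex_div_permIndex (wreathOnLetters_ne_one hg)
      (by positivity) (by positivity) support_le

/-- Theorem 2.6 of Bhargava's paper. Let `r, m, k` be positive integers with `k < m/2`
and `r > 1` or `k > 1`, and let `n = C(m,k)^r`. For every non-identity element
`g = (σ_1,...,σ_r; τ)` of the wreath product `S_m ≀ S_r`, writing `ind(g)` for its
index acting on `Ω = Δ^r` (`Δ` the `k`-subsets of `{1,...,m}`) and `ind'(g)` for its
index acting imprimitively on `rm` letters, one has `ind(g)/ind'(g) > n/(3rm)`. -/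
theorem wreath_index_ratio (r m k : ℕ) (hr : 1 ≤ r) (hk : 1 ≤ k) (hkm : 2 * k < m)
    (hrk : 1 < r ∨ 1 < k)
    (σ : Fin r → Equiv.Perm (Fin m)) (τ : Equiv.Perm (Fin r))
    (hg : ¬(τ = 1 ∧ ∀ i, σ i = 1)) :
    ((Nat.choose m k : ℝ) ^ r) / (3 * (r : ℝ) * (m : ℝ)) <
      (permIndex (wreathOnSets r m k σ τ) : ℝ) /
        (permIndex (wreathOnLetters r m σ τ) : ℝ) :=
  wreath_index_ratio_general r m k hk (by omega) (by omega) σ τ hg
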